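/- Let n : ℕ, b : Fin n → Fin 4, and let E be any complex matrix indexed by (Fin n → Fin 2). Then (P_b * E * P_b + E)/2 = ∑_{a ∈ S} ((trace (E * P_a))/2^n) • P_a, where S is the finite set of all a : Fin n → Fin 4 such that P_a * P_b = P_b * P_a. That is, one layer of Pauli check sandwiching with check P_b eliminates exactly the anticommuting terms from the Pauli expansion of the Kraus operator E. -/

import Mathlib

open Matrix Complex Kronecker

noncomputable def pauli : Fin 4 → Matrix (Fin 2) (Fin 2) ℂ
  | 0 => !![1, 0; 0, 1]
  | 1 => !![0, 1; 1, 0]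
  | 2 => !![0, -Complex.I; Complex.I, 0]
  | 3 => !![1, 0; 0, -1]

noncomputable def PauliString {n : ℕ} (a : Fin n → Fin 4) :
    Matrix (Fin n → Fin 2) (Fin n → Fin 2) ℂ :=
  Matrix.of fun f g => ∏ i, pauli (a i) (f i) (g i)

/-! The completeness relation `∑ c, σ_c ⊗ σ_c = 2 • SWAP` of the single-qubit Pauli matrices
tensorizes, and contracting it with `E` gives the Pauli expansion of `E`. Single-qubit Pauli
matrices commute up to sign, hence so do Pauli strings. Since `P_b` is an involution, conjugation
by it fixes the strings that commute with `P_b` and negates all others, so averaging it with the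
identity projects onto the former. -/

theorem sandwich_of_commute {M : Type*} [Monoid M] {b x : M} (hb : b * b = 1) (h : x * b = b * x) :
    b * x * b = x := by
  rw [← h, mul_assoc, hb, mul_one]

theorem sandwich_of_anticommute {M : Type*} [Monoid M] [HasDistribNeg M] {b x : M}
    (hb : b * b = 1) (h : x * b = -(b * x)) : b * x * b = -x := by
  rw [mul_assoc, h, mul_neg, ← mul_assoc, hb, one_mul]

theorem sandwich_sum_add_sum {ι R A : Type*} [CommSemiring R] [Ring A] [Algebra R A]
    [DecidableEq A] {b : A} (hb : b * b = 1) {x : ι → A}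
    (hx : ∀ i, x i * b = b * x i ∨ x i * b = -(b * x i)) (s : Finset ι) (c : ι → R) :
    b * (∑ i ∈ s, c i • x i) * b + ∑ i ∈ s, c i • x i =
      (2 : R) • ∑ i ∈ s with x i * b = b * x i, c i • x i := by
  rw [Finset.mul_sum, Finset.sum_mul, ← Finset.sum_add_distrib, Finset.sum_filter,
    Finset.smul_sum]
  refine Finset.sum_congr rfl fun i _ ↦ ?_
  rw [mul_smul_comm, smul_mul_assoc]
  split_ifs with hcomm
  · rw [sandwich_of_commute hb hcomm, two_smul]
  · rw [sandwich_of_anticommute hb ((hx i).resolve_left hcomm), smul_neg, neg_add_cancel,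
      smul_zero]

section PiKronecker

variable {ι R : Type*} [Fintype ι] [CommSemiring R] {l m n : ι → Type*}

/-- The Kronecker product `⨂ i, A i` of a finite family of matrices, with rows and columns indexed
by the families of row and column indices of the factors. -/
def piKronecker (A : ∀ i, Matrix (m i) (n i) R) : Matrix (∀ i, m i) (∀ i, n i) R :=
  of fun f g ↦ ∏ i, A i (f i) (g i)

theorem piKronecker_apply (A : ∀ i, Matrix (m i) (n i) R) (f : ∀ i, m i) (g : ∀ i, n i) :
    piKronecker A f g = ∏ i, A i (f i) (g i) :=
  rfl

theorem piKronecker_mul [DecidableEq ι] [∀ i, Fintype (m i)] (A : ∀ i, Matrix (l i) (m i) R)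
    (B : ∀ i, Matrix (m i) (n i) R) :
    piKronecker A * piKronecker B = piKronecker fun i ↦ A i * B i := by
  ext f g
  simp only [mul_apply, piKronecker_apply, ← Finset.prod_mul_distrib, Fintype.prod_sum]

theorem piKronecker_one [∀ i, DecidableEq (m i)] [DecidableEq (∀ i, m i)] :
    piKronecker (fun i ↦ (1 : Matrix (m i) (m i) R)) = 1 := by
  ext f g
  simp only [piKronecker_apply, one_apply, Fintype.prod_boole, funext_iff]

theorem piKronecker_smul {S : Type*} [CommMonoid S] [MulAction S R] [IsScalarTower S R R]
    [SMulCommClass S R R] (s : ι → S) (A : ∀ i, Matrix (m i) (n i) R) :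
    (piKronecker fun i ↦ s i • A i) = (∏ i, s i) • piKronecker A := by
  ext f g
  simp only [piKronecker_apply, Matrix.smul_apply, Finset.prod_smul]

end PiKronecker

section SwapComplete

variable {κ m R : Type*} [Fintype κ] [DecidableEq m] [CommSemiring R]

/-- The completeness relation `∑ c, P c ⊗ P c = d • SWAP` of a family of square matrices, stated
entrywise. When `d` is invertible, the `P c` span all matrices, every `E` having an expansion
with coefficients `d⁻¹ * trace (E * P c)`. -/
def SwapComplete (P : κ → Matrix m m R) (d : R) : Prop :=
  ∀ i j k l, ∑ c, P c i j * P c k l = if i = l ∧ j = k then d else 0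

theorem SwapComplete.sum_trace_mul_smul [Fintype m] {P : κ → Matrix m m R} {d : R}
    (hP : SwapComplete P d) (E : Matrix m m R) : ∑ c, trace (E * P c) • P c = d • E := by
  ext i j
  calc (∑ c, trace (E * P c) • P c) i j
      = ∑ c, ∑ k, ∑ l, E k l * (P c l k * P c i j) := by
        simp only [Matrix.sum_apply, Matrix.smul_apply, smul_eq_mul, trace, diag_apply, mul_apply,
          Finset.sum_mul, mul_assoc]
    _ = ∑ k, ∑ l, E k l * ∑ c, P c l k * P c i j := by
        simp only [Finset.mul_sum]
        rw [Finset.sum_comm]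
        exact Finset.sum_congr rfl fun k _ ↦ Finset.sum_comm
    _ = (d • E) i j := by
        simp [hP _ _ _ _, ite_and, mul_comm d]

theorem SwapComplete.piKronecker {ι : Type*} [Fintype ι] [DecidableEq ι] {κ m : ι → Type*}
    [∀ i, Fintype (κ i)] [∀ i, DecidableEq (m i)] {P : ∀ i, κ i → Matrix (m i) (m i) R} {d : ι → R}
    (hP : ∀ i, SwapComplete (P i) (d i)) :
    SwapComplete (fun a : ∀ i, κ i ↦ piKronecker fun i ↦ P i (a i)) (∏ i, d i) := by
  intro f g h k
  simp only [piKronecker_apply, ← Finset.prod_mul_distrib]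
  rw [← Fintype.prod_sum fun i c ↦ P i c (f i) (g i) * P i c (h i) (k i)]
  simp only [hP _ _ _ _ _, Fintype.prod_ite_zero, funext_iff, forall_and]

end SwapComplete

theorem pauli_zero : pauli 0 = 1 :=
  one_fin_two.symm

theorem pauli_mul_self (c : Fin 4) : pauli c * pauli c = 1 := by
  fin_cases c <;> simp [pauli, one_fin_two]

theorem pauli_anticommute {c d : Fin 4} (hc : c ≠ 0) (hd : d ≠ 0) (hcd : c ≠ d) :
    pauli c * pauli d = -(pauli d * pauli c) := by
  fin_cases c <;> fin_cases d <;> simp_all [pauli]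

theorem exists_pauli_mul_eq_units_smul (c d : Fin 4) :
    ∃ s : ℤˣ, pauli c * pauli d = s • (pauli d * pauli c) := by
  by_cases h : c = 0 ∨ d = 0 ∨ c = d
  · refine ⟨1, ?_⟩
    rcases h with rfl | rfl | rfl <;> simp [pauli_zero]
  · push Not at h
    exact ⟨-1, by rw [pauli_anticommute h.1 h.2.1 h.2.2, Units.neg_smul, one_smul]⟩

theorem swapComplete_pauli : SwapComplete pauli 2 := by
  intro i j k l
  fin_cases i <;> fin_cases j <;> fin_cases k <;> fin_cases l <;>
    norm_num [pauli, Fin.sum_univ_four]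

section PauliString

variable {n : ℕ}

theorem pauliString_eq_piKronecker (a : Fin n → Fin 4) :
    PauliString a = piKronecker fun i ↦ pauli (a i) :=
  rfl

theorem pauliString_mul_self (b : Fin n → Fin 4) : PauliString b * PauliString b = 1 := by
  simp only [pauliString_eq_piKronecker, piKronecker_mul, pauli_mul_self, piKronecker_one]

theorem pauliString_commute_or_anticommute (a b : Fin n → Fin 4) :
    PauliString a * PauliString b = PauliString b * PauliString a ∨
      PauliString a * PauliString b = -(PauliString b * PauliString a) := by
  choose s hs using fun i ↦ exists_pauli_mul_eq_units_smul (a i) (b i)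
  have hcomm : PauliString a * PauliString b = (∏ i, s i) • (PauliString b * PauliString a) := by
    simp only [pauliString_eq_piKronecker, piKronecker_mul, hs, piKronecker_smul]
  rcases Int.units_eq_one_or (∏ i, s i) with h | h
  · exact .inl (by rw [hcomm, h, one_smul])
  · exact .inr (by rw [hcomm, h, Units.neg_smul, one_smul])

theorem swapComplete_pauliString : SwapComplete (PauliString (n := n)) (2 ^ n) := by
  rw [← Fin.prod_const]
  exact SwapComplete.piKronecker fun _ ↦ swapComplete_pauli

theorem sum_trace_div_smul_pauliString (E : Matrix (Fin n → Fin 2) (Fin n → Fin 2) ℂ) :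
    ∑ a, (trace (E * PauliString a) / (2 : ℂ) ^ n) • PauliString a = E := by
  simp only [div_eq_inv_mul, mul_smul, ← Finset.smul_sum,
    swapComplete_pauliString.sum_trace_mul_smul]
  exact inv_smul_smul₀ (pow_ne_zero n two_ne_zero) E

end PauliString

theorem single_layer_eliminates_anticommuting_terms (n : ℕ) (b : Fin n → Fin 4)
    (E : Matrix (Fin n → Fin 2) (Fin n → Fin 2) ℂ) :
    ((1 : ℂ) / 2) • (PauliString b * E * PauliString b + E) =
      ∑ a ∈ Finset.univ.filter
          (fun a : Fin n → Fin 4 =>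
            PauliString a * PauliString b = PauliString b * PauliString a),
        (Matrix.trace (E * PauliString a) / (2 : ℂ) ^ n) • PauliString a := by
  have hsandwich := sandwich_sum_add_sum (pauliString_mul_self b)
    (pauliString_commute_or_anticommute · b) Finset.univ
    fun a ↦ trace (E * PauliString a) / (2 : ℂ) ^ n
  rw [sum_trace_div_smul_pauliString] at hsandwich
  rw [hsandwich, one_div, inv_smul_smul₀ two_ne_zero]
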